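/- arXiv:2412.10837 — 2 statements merged into one kernel-verified Lean document; each statement's English description precedes it below -/
import Mathlib

section
/- Every O(n)-equivariant linear map φ : (ℝⁿ)^{⊗k} → (ℝⁿ)^{⊗l} is an ℝ-linear combination of the maps E_β, where β ranges over all perfect matchings of [l+k]; equivalently, the linear map from the free ℝ-vector space on perfect matchings of [l+k] to Hom_{O(n)}((ℝⁿ)^{⊗k}, (ℝⁿ)^{⊗l}) sending β to E_β is surjective. -/
open Classical
noncomputable section

/-- The `k`-th tensor (Kronecker) power of an `n × n` real matrix. -/
def tensorPow (n k : ℕ) (g : Matrix (Fin n) (Fin n) ℝ) :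
    Matrix (Fin k → Fin n) (Fin k → Fin n) ℝ :=
  Matrix.of fun I J => ∏ i, g (I i) (J i)

/-- The matrix `D_π : (ℝⁿ)^{⊗k} → (ℝⁿ)^{⊗l}` associated to a set partition `π` of
`[l+k]` (encoded as a setoid on `Fin (l+k)`, top row first). -/
def Dmat (n l k : ℕ) (π : Setoid (Fin (l + k))) :
    Matrix (Fin l → Fin n) (Fin k → Fin n) ℝ :=
  Matrix.of fun I J =>
    if ∀ x y, π.r x y → Fin.append I J x = Fin.append I J y then (1 : ℝ) else 0

/-- The set partition whose blocks are the pairs `{x, f x}` of a (fixed-point-free)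
involution `f`, i.e. a perfect matching of `Fin N`. -/
def matchingSetoid {N : ℕ} (f : Fin N → Fin N) (hf : ∀ x, f (f x) = x) : Setoid (Fin N) where
  r x y := y = x ∨ y = f x
  iseqv := by
    constructor
    · intro x; exact Or.inl rfl
    · rintro x y (rfl | rfl)
      · exact Or.inl rfl
      · right; rw [hf]
    · rintro x y z (rfl | rfl) h
      · exact h
      · rcases h with rfl | rfl
        · right; rfl
        · left; rw [hf]

/-!
Turning inputs into outputs makes an equivariant map an `O(n)`-invariant tensor, so it suffices
that an invariant tensor `T` of order `N` orthogonal to all perfect matching tensors vanishes.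
Every contraction of `T` is invariant and orthogonal to the matching tensors of order `N - 2`, so
by induction `T` is traceless. Let `P a b` replace, in all possible ways, one index `a` by `b`.
Infinitesimal rotations give `P a b T = P b a T`, and since `T` is traceless
`∑ a b, P a b (P a b T) = N T`; hence `∑ a b, ‖P a b T‖² = N ‖T‖²`. On the other hand, reflections
show that in each nonzero entry of `T` every index `a` occurs an even number `m` of times. As
`P a a` multiplies that entry by `m` and `m² ≥ 2 m`, the diagonal terms alone contribute at least
`2 N ‖T‖²`. Thus `T = 0` for `N > 0`; for `N = 0` the empty matching tensor spans everything.
-/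

open Function Finset
open scoped Matrix

section KroneckerPow

variable {ι κ α R : Type*} [Fintype ι] [Fintype κ] [CommSemiring R]

/-- The matrix of `g^{⊗ι}` in the tensor basis indexed by `ι → α`: the tensor power `tensorPow`
with an arbitrary finite type of tensor factors. -/
def kroneckerPow (ι : Type*) [Fintype ι] (g : Matrix α α R) : Matrix (ι → α) (ι → α) R :=
  Matrix.of fun I J => ∏ i, g (I i) (J i)

lemma kroneckerPow_apply (g : Matrix α α R) (I J : ι → α) :
    kroneckerPow ι g I J = ∏ i, g (I i) (J i) := rfl

lemma kroneckerPow_transpose (g : Matrix α α R) :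
    kroneckerPow ι gᵀ = (kroneckerPow ι g)ᵀ := rfl

lemma kroneckerPow_diagonal [DecidableEq α] (d : α → R) :
    kroneckerPow ι (Matrix.diagonal d) = Matrix.diagonal fun I => ∏ i, d (I i) := by
  ext I J
  rcases eq_or_ne I J with rfl | hIJ
  · simp [kroneckerPow_apply]
  · obtain ⟨i, hi⟩ := Function.ne_iff.mp hIJ
    rw [Matrix.diagonal_apply_ne _ hIJ]
    exact prod_eq_zero (mem_univ i) (Matrix.diagonal_apply_ne d hi)

lemma kroneckerPow_one [DecidableEq α] : kroneckerPow ι (1 : Matrix α α R) = 1 := by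
  simpa using kroneckerPow_diagonal (ι := ι) (1 : α → R)

lemma kroneckerPow_mul [DecidableEq ι] [Fintype α] (g h : Matrix α α R) :
    kroneckerPow ι (g * h) = kroneckerPow ι g * kroneckerPow ι h := by
  ext I J
  simp only [kroneckerPow_apply, Matrix.mul_apply, Fintype.prod_sum, prod_mul_distrib]

lemma kroneckerPow_submatrix_arrowCongr (e : ι ≃ κ) (g : Matrix α α R) :
    (kroneckerPow κ g).submatrix (e.arrowCongr (.refl α)) (e.arrowCongr (.refl α)) =
      kroneckerPow ι g := by
  ext I J
  exact Fintype.prod_equiv e.symm _ _ fun _ => rfl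

end KroneckerPow

section Bend

variable {ι κ α R : Type*}

/-- Turning the inputs of a linear map into outputs identifies matrices from `κ`-tensors to
`ι`-tensors with `(ι ⊕ κ)`-tensors. -/
def bend [Semiring R] : Matrix (ι → α) (κ → α) R ≃ₗ[R] ((ι ⊕ κ → α) → R) where
  toFun φ I := φ (I ∘ Sum.inl) (I ∘ Sum.inr)
  invFun T := Matrix.of fun I J => T (Sum.elim I J)
  map_add' _ _ := rfl
  map_smul' _ _ := rfl
  left_inv _ := rfl
  right_inv T := funext fun I => congrArg T (Sum.elim_comp_inl_inr I)

lemma bend_apply [Semiring R] (φ : Matrix (ι → α) (κ → α) R) (I : ι ⊕ κ → α) :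
    bend φ I = φ (I ∘ Sum.inl) (I ∘ Sum.inr) := rfl

lemma bend_sumElim [Semiring R] (φ : Matrix (ι → α) (κ → α) R) (I : ι → α) (J : κ → α) :
    bend φ (Sum.elim I J) = φ I J := rfl

lemma bend_symm_apply [Semiring R] (T : (ι ⊕ κ → α) → R) (I : ι → α) (J : κ → α) :
    bend.symm T I J = T (Sum.elim I J) := rfl

variable [Fintype ι] [Fintype κ] [DecidableEq ι] [DecidableEq κ] [Fintype α]

lemma sum_sum_arrow {M : Type*} [AddCommMonoid M] (F : (ι ⊕ κ → α) → M) :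
    ∑ I, F I = ∑ A, ∑ B, F (Sum.elim A B) := by
  rw [← Fintype.sum_prod_type']
  exact Fintype.sum_equiv (Equiv.sumArrowEquivProdArrow ι κ α) _ _
    fun I => congrArg F (Sum.elim_comp_inl_inr I).symm

lemma kroneckerPow_mulVec_bend [CommSemiring R] (g : Matrix α α R)
    (φ : Matrix (ι → α) (κ → α) R) :
    kroneckerPow (ι ⊕ κ) g *ᵥ bend φ = bend (kroneckerPow ι g * φ * (kroneckerPow κ g)ᵀ) := by
  ext I
  simp only [Matrix.mulVec, dotProduct, sum_sum_arrow, kroneckerPow_apply, Fintype.prod_sum_type,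
    bend_apply, Matrix.mul_apply, Matrix.transpose_apply, sum_mul, Sum.elim_inl,
    Sum.elim_inr, comp_apply]
  rw [sum_comm]
  exact Fintype.sum_congr _ _ fun B => Fintype.sum_congr _ _ fun A => mul_right_comm _ _ _

end Bend

section Contract

variable {ι κ α R : Type*} [Fintype κ] [DecidableEq κ] [Fintype α] [CommRing R]

/-- The contraction of a tensor along two copies of `κ`: its entries are summed over all tuples
that agree on the two copies. -/
def contract (T : ((κ ⊕ κ) ⊕ ι → α) → R) (I : ι → α) : R :=
  ∑ A : κ → α, T (Sum.elim (Sum.elim A A) I)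

lemma contract_eq_vecMul [DecidableEq α] (T : ((κ ⊕ κ) ⊕ ι → α) → R) :
    contract T = bend (1 : Matrix (κ → α) (κ → α) R) ᵥ* bend.symm T := by
  ext I
  simp only [contract, Matrix.vecMul, dotProduct, sum_sum_arrow, bend_sumElim,
    bend_symm_apply]
  exact Fintype.sum_congr _ _ fun A => by simp [Matrix.one_apply]

end Contract

section Invariants

variable {ι κ α R : Type*} [Fintype ι] [Fintype κ] [Fintype α]
  [DecidableEq ι] [DecidableEq κ] [DecidableEq α] [CommRing R]

/-- The `ι`-tensors fixed by every orthogonal matrix. -/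
def orthogonalInvariants (ι α R : Type*) [Fintype ι] [Fintype α] [DecidableEq ι] [DecidableEq α]
    [CommRing R] : Submodule R ((ι → α) → R) where
  carrier := {T | ∀ g : Matrix α α R, gᵀ * g = 1 → kroneckerPow ι g *ᵥ T = T}
  zero_mem' g _ := Matrix.mulVec_zero _
  add_mem' hT hS g hg := by rw [Matrix.mulVec_add, hT g hg, hS g hg]
  smul_mem' c T hT g hg := by rw [Matrix.mulVec_smul, hT g hg]

lemma kroneckerPow_transpose_mul_self {g : Matrix α α R} (hg : gᵀ * g = 1) :
    (kroneckerPow ι g)ᵀ * kroneckerPow ι g = 1 := by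
  rw [← kroneckerPow_transpose, ← kroneckerPow_mul, hg, kroneckerPow_one]

lemma comp_arrowCongr_mem_orthogonalInvariants {T : (κ → α) → R}
    (hT : T ∈ orthogonalInvariants κ α R) (e : ι ≃ κ) :
    T ∘ e.arrowCongr (.refl α) ∈ orthogonalInvariants ι α R := by
  intro g hg
  rw [← kroneckerPow_submatrix_arrowCongr e, Matrix.submatrix_mulVec_equiv, comp_assoc,
    Equiv.self_comp_symm, comp_id, hT g hg]

lemma bend_mem_orthogonalInvariants_iff {φ : Matrix (ι → α) (κ → α) R} :
    bend φ ∈ orthogonalInvariants (ι ⊕ κ) α R ↔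
      ∀ g : Matrix α α R, gᵀ * g = 1 → kroneckerPow ι g * φ = φ * kroneckerPow κ g := by
  refine forall₂_congr fun g hg => ?_
  have hκ := kroneckerPow_transpose_mul_self (ι := κ) hg
  rw [kroneckerPow_mulVec_bend, bend.injective.eq_iff]
  constructor <;> intro h
  · conv_rhs => rw [← h, Matrix.mul_assoc, hκ, Matrix.mul_one]
  · rw [h, Matrix.mul_assoc, mul_eq_one_comm.mp hκ, Matrix.mul_one]

lemma bend_one_mem_orthogonalInvariants :
    bend (1 : Matrix (κ → α) (κ → α) R) ∈ orthogonalInvariants (κ ⊕ κ) α R :=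
  bend_mem_orthogonalInvariants_iff.mpr fun g _ => by rw [Matrix.mul_one, Matrix.one_mul]

lemma contract_mem_orthogonalInvariants {T : ((κ ⊕ κ) ⊕ ι → α) → R}
    (hT : T ∈ orthogonalInvariants ((κ ⊕ κ) ⊕ ι) α R) :
    contract T ∈ orthogonalInvariants ι α R := by
  obtain ⟨φ, rfl⟩ := bend.surjective T
  intro g hg
  have hφ := bend_mem_orthogonalInvariants_iff.mp hT gᵀ (by
    rw [Matrix.transpose_transpose, mul_eq_one_comm.mp hg])
  set δ := bend (1 : Matrix (κ → α) (κ → α) R)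
  have hδ : kroneckerPow (κ ⊕ κ) g *ᵥ δ = δ := bend_one_mem_orthogonalInvariants g hg
  rw [contract_eq_vecMul, LinearEquiv.symm_apply_apply]
  calc kroneckerPow ι g *ᵥ (δ ᵥ* φ)
      = δ ᵥ* (φ * kroneckerPow ι gᵀ) := by
        rw [kroneckerPow_transpose, ← Matrix.vecMul_vecMul, Matrix.vecMul_transpose]
    _ = (kroneckerPow (κ ⊕ κ) g *ᵥ δ) ᵥ* φ := by
        rw [← hφ, kroneckerPow_transpose, ← Matrix.vecMul_vecMul, Matrix.vecMul_transpose]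
    _ = δ ᵥ* φ := by rw [hδ]

end Invariants

section Pairing

variable {ι κ μ α R : Type*}

/-- The tensor of the perfect matching of `ι` with pairs `{e (inl k), e (inr k)}`, i.e. the
product over `k` of the Kronecker deltas of these pairs. -/
def pairingTensor (α R : Type*) [Semiring R] (e : κ ⊕ κ ≃ ι) (I : ι → α) : R :=
  if ∀ k, I (e (.inl k)) = I (e (.inr k)) then 1 else 0

lemma pairingTensor_eq_bend_one_comp [Semiring R] [DecidableEq (κ → α)] (e : κ ⊕ κ ≃ ι) :
    pairingTensor α R e =
      bend (1 : Matrix (κ → α) (κ → α) R) ∘ e.symm.arrowCongr (.refl α) := by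
  ext I
  simp [pairingTensor, bend_apply, Matrix.one_apply, funext_iff]

variable [Fintype ι] [DecidableEq ι] [Fintype α] [CommRing R]

lemma pairingTensor_mem_orthogonalInvariants [DecidableEq α] (e : κ ⊕ κ ≃ ι) :
    pairingTensor α R e ∈ orthogonalInvariants ι α R := by
  have : Finite κ := .of_injective (e ∘ Sum.inl) (e.injective.comp Sum.inl_injective)
  cases nonempty_fintype κ
  rw [pairingTensor_eq_bend_one_comp]
  exact comp_arrowCongr_mem_orthogonalInvariants bend_one_mem_orthogonalInvariants e.symm

variable [Fintype κ] [DecidableEq κ]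

lemma dotProduct_pairingTensor (T : (ι → α) → R) (e : κ ⊕ κ ≃ ι) :
    T ⬝ᵥ pairingTensor α R e = ∑ A : κ → α, T (Sum.elim A A ∘ e.symm) := by
  rw [dotProduct, ← (e.arrowCongr (.refl α)).sum_comp, sum_sum_arrow]
  simp [pairingTensor, ← funext_iff, Equiv.arrowCongr]

lemma comp_arrowCongr_dotProduct_pairingTensor (T : (ι → α) → R) (e : κ ≃ ι) (e' : μ ⊕ μ ≃ κ) :
    (T ∘ e.arrowCongr (.refl α)) ⬝ᵥ pairingTensor α R e' =
      T ⬝ᵥ pairingTensor α R (e'.trans e) := by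
  refine Fintype.sum_equiv (e.arrowCongr (.refl α)) _ _ fun I => ?_
  simp [pairingTensor, Equiv.arrowCongr]

lemma contract_dotProduct_pairingTensor (T : ((κ ⊕ κ) ⊕ ι → α) → R) (e : μ ⊕ μ ≃ ι) :
    contract T ⬝ᵥ pairingTensor α R e =
      T ⬝ᵥ pairingTensor α R
        ((Equiv.sumSumSumComm κ μ κ μ).trans ((Equiv.refl _).sumCongr e)) := by
  have : Finite μ := .of_injective (e ∘ Sum.inl) (e.injective.comp Sum.inl_injective)
  cases nonempty_fintype μ
  rw [dotProduct_pairingTensor, dotProduct_pairingTensor, sum_sum_arrow, sum_comm]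
  refine Fintype.sum_congr _ _ fun B => Fintype.sum_congr _ _ fun A => congrArg T ?_
  ext ((x | x) | x)
  · rfl
  · rfl
  · obtain ⟨y | y, rfl⟩ := e.surjective x <;> simp

end Pairing

section KroneckerDeriv

variable {ι α : Type*} [Fintype ι] [DecidableEq ι] [DecidableEq α]

/-- The derivation `∑ i, 1 ⊗ ⋯ ⊗ X ⊗ ⋯ ⊗ 1` (with `X` in position `i`) of `ι`-tensors, which is
the derivative of `kroneckerPow ι` at the identity in the direction `X`. -/
def kroneckerDeriv {R : Type*} [CommRing R] (ι : Type*) [Fintype ι] [DecidableEq ι]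
    (X : Matrix α α R) : Matrix (ι → α) (ι → α) R :=
  Matrix.of fun I J => ∑ i, (∏ j ∈ univ.erase i, (1 : Matrix α α R) (I j) (J j)) * X (I i) (J i)

/-- The polarization operator of classical invariant theory: the derivation of tensors given by
the elementary matrix `E_{ab}`, which sums over all ways to replace one index `a` by `b`. -/
def polarization {R : Type*} [CommRing R] (a b : α) : Matrix (ι → α) (ι → α) R :=
  kroneckerDeriv ι (Matrix.single a b 1)

section CommRing

variable {R : Type*} [CommRing R]

lemma kroneckerDeriv_apply (X : Matrix α α R) (I J : ι → α) :
    kroneckerDeriv ι X I J =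
      ∑ i, (∏ j ∈ univ.erase i, (1 : Matrix α α R) (I j) (J j)) * X (I i) (J i) := rfl

lemma kroneckerDeriv_transpose (X : Matrix α α R) :
    kroneckerDeriv ι Xᵀ = (kroneckerDeriv ι X)ᵀ := by
  ext I J
  simp only [kroneckerDeriv_apply, Matrix.transpose_apply, Matrix.one_apply, eq_comm]

lemma polarization_transpose (a b : α) :
    (polarization a b : Matrix (ι → α) (ι → α) R)ᵀ = polarization b a := by
  rw [polarization, ← kroneckerDeriv_transpose, Matrix.transpose_single, polarization]

lemma kroneckerDeriv_sub (X Y : Matrix α α R) :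
    kroneckerDeriv ι (X - Y) = kroneckerDeriv ι X - kroneckerDeriv ι Y := by
  ext I J
  simp only [kroneckerDeriv_apply, Matrix.sub_apply, mul_sub, sum_sub_distrib]

lemma prod_erase_one_apply (I J : ι → α) (i : ι) :
    ∏ j ∈ univ.erase i, (1 : Matrix α α R) (I j) (J j) = if update I i (J i) = J then 1 else 0 := by
  simp only [Matrix.one_apply, update_eq_iff, true_and]
  rw [prod_ite_zero]
  simp

variable [Fintype α]

lemma kroneckerDeriv_mulVec_apply (X : Matrix α α R) (T : (ι → α) → R) (I : ι → α) :
    (kroneckerDeriv ι X *ᵥ T) I = ∑ i, ∑ c, X (I i) c * T (update I i c) := by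
  simp only [Matrix.mulVec, dotProduct, kroneckerDeriv_apply, prod_erase_one_apply, sum_mul]
  rw [sum_comm]
  refine Fintype.sum_congr _ _ fun i => ?_
  rw [← sum_fiberwise univ fun J : ι → α => J i]
  refine Fintype.sum_congr _ _ fun c => ?_
  rw [sum_eq_single (update I i c)]
  · simp
  · intro J hJ hne
    rw [mem_filter_univ] at hJ
    simp [hJ, hne.symm]
  · simp

lemma polarization_mulVec_apply (a b : α) (T : (ι → α) → R) (I : ι → α) :
    (polarization a b *ᵥ T) I = ∑ i, if I i = a then T (update I i b) else 0 := by
  simp [polarization, kroneckerDeriv_mulVec_apply, Matrix.single_apply, ite_and, eq_comm]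

end CommRing

lemma hasDerivAt_kroneckerPow {g : ℝ → Matrix α α ℝ} {X : Matrix α α ℝ} {t : ℝ} (hgt : g t = 1)
    (hg : ∀ a b, HasDerivAt (fun s => g s a b) (X a b) t) (I J : ι → α) :
    HasDerivAt (fun s => kroneckerPow ι (g s) I J) (kroneckerDeriv ι X I J) t := by
  simp only [kroneckerDeriv_apply, ← hgt]
  exact HasDerivAt.fun_finsetProd fun i _ => hg _ _

variable [Fintype α]

lemma hasDerivAt_exp_smul_apply (X : Matrix α α ℝ) (a b : α) :
    HasDerivAt (fun t : ℝ => NormedSpace.exp (t • X) a b) (X a b) 0 := by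
  open scoped Matrix.Norms.Operator in
  have hexp := hasDerivAt_exp_smul_const X (0 : ℝ)
  rw [zero_smul, NormedSpace.exp_zero, one_mul] at hexp
  exact hasDerivAt_pi.mp (hasDerivAt_pi.mp hexp a) b

lemma exp_transpose_mul_exp_of_skew {X : Matrix α α ℝ} (hX : Xᵀ = -X) :
    (NormedSpace.exp X)ᵀ * NormedSpace.exp X = 1 := by
  rw [← Matrix.exp_transpose, hX, ← Matrix.exp_add_of_commute _ _ (Commute.refl X).neg_left,
    neg_add_cancel, NormedSpace.exp_zero]

lemma kroneckerDeriv_mulVec_eq_zero {T : (ι → α) → ℝ} (hT : T ∈ orthogonalInvariants ι α ℝ)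
    {X : Matrix α α ℝ} (hX : Xᵀ = -X) : kroneckerDeriv ι X *ᵥ T = 0 := by
  ext I
  have hderiv : HasDerivAt (fun t : ℝ => (kroneckerPow ι (NormedSpace.exp (t • X)) *ᵥ T) I)
      ((kroneckerDeriv ι X *ᵥ T) I) 0 :=
    HasDerivAt.fun_sum fun J _ => (hasDerivAt_kroneckerPow (by simp)
      (hasDerivAt_exp_smul_apply X) I J).mul_const (T J)
  have hconst (t : ℝ) : (kroneckerPow ι (NormedSpace.exp (t • X)) *ᵥ T) I = T I := by
    rw [hT _ (exp_transpose_mul_exp_of_skew (by rw [Matrix.transpose_smul, hX, smul_neg]))]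
  simp only [hconst] at hderiv
  exact hderiv.unique (hasDerivAt_const 0 (T I))

end KroneckerDeriv

section Traceless

variable {ι α : Type*} [Fintype ι] [DecidableEq ι] [Fintype α] [DecidableEq α]

/-- A tensor is traceless if its contraction along any two distinct positions vanishes. -/
def IsTraceless {ι α R : Type*} [DecidableEq ι] [Fintype α] [AddCommMonoid R]
    (T : (ι → α) → R) : Prop :=
  ∀ ⦃i j⦄, i ≠ j → ∀ I, ∑ b, T (update (update I i b) j b) = 0

lemma IsTraceless.sum_polarization_mulVec {R : Type*} [CommRing R] {T : (ι → α) → R}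
    (hT : IsTraceless T) (I : ι → α) (i : ι) :
    ∑ b, (polarization (I i) b *ᵥ T) (update I i b) = T I := by
  simp only [polarization_mulVec_apply]
  rw [sum_comm, sum_eq_single i]
  · simp
  · intro j _ hji
    simp only [update_of_ne hji]
    split_ifs
    · exact hT hji.symm I
    · exact sum_const_zero
  · simp

lemma IsTraceless.sum_sum_polarization_mulVec_mulVec {R : Type*} [CommRing R]
    {T : (ι → α) → R} (hT : IsTraceless T) :
    ∑ a, ∑ b, polarization a b *ᵥ (polarization a b *ᵥ T) = (Fintype.card ι : R) • T := by
  ext I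
  let S (a b : α) := polarization a b *ᵥ T
  calc (∑ a, ∑ b, polarization a b *ᵥ S a b) I
      = ∑ i, ∑ b, ∑ a, if I i = a then S a b (update I i b) else 0 := by
        simp only [Finset.sum_apply, polarization_mulVec_apply]
        rw [sum_comm]
        exact (Fintype.sum_congr _ _ fun b => sum_comm).trans sum_comm
    _ = ∑ i, ∑ b, S (I i) b (update I i b) := by simp
    _ = ((Fintype.card ι : R) • T) I := by
        simp [S, hT.sum_polarization_mulVec I]

lemma polarization_self_mulVec_apply {R : Type*} [CommRing R] (a : α)
    (T : (ι → α) → R) (I : ι → α) :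
    (polarization a a *ᵥ T) I = #{i | I i = a} * T I := by
  have hterm (i : ι) : (if I i = a then T (update I i a) else 0) = if I i = a then T I else 0 := by
    split_ifs with h
    · rw [← h, update_eq_self]
    · rfl
  simp [polarization_mulVec_apply, hterm, ← sum_filter]

lemma polarization_comm_mulVec {T : (ι → α) → ℝ} (hT : T ∈ orthogonalInvariants ι α ℝ)
    (a b : α) : polarization a b *ᵥ T = polarization b a *ᵥ T := by
  rw [← sub_eq_zero, ← Matrix.sub_mulVec, polarization, polarization, ← kroneckerDeriv_sub]
  exact kroneckerDeriv_mulVec_eq_zero hT (by simp)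

lemma even_card_filter_eq {T : (ι → α) → ℝ} (hT : T ∈ orthogonalInvariants ι α ℝ) {I : ι → α}
    (hI : T I ≠ 0) (a : α) : Even #{i | I i = a} := by
  let d (c : α) : ℝ := if c = a then -1 else 1
  have hd : (Matrix.diagonal d)ᵀ * Matrix.diagonal d = 1 := by
    rw [Matrix.diagonal_transpose, Matrix.diagonal_mul_diagonal, Matrix.diagonal_eq_one]
    ext c
    by_cases hc : c = a <;> simp [d, hc]
  have hinv := congrFun (hT _ hd) I
  rw [kroneckerPow_diagonal, Matrix.mulVec_diagonal, mul_eq_right₀ hI, prod_ite, prod_const,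
    prod_const_one, mul_one] at hinv
  rwa [neg_one_pow_eq_one_iff_even (by norm_num)] at hinv

lemma sum_sum_dotProduct_self_of_isTraceless {T : (ι → α) → ℝ}
    (hT : T ∈ orthogonalInvariants ι α ℝ) (htr : IsTraceless T) :
    ∑ a, ∑ b, (polarization a b *ᵥ T) ⬝ᵥ (polarization a b *ᵥ T) =
      Fintype.card ι * (T ⬝ᵥ T) := by
  have hadj (a b : α) : (polarization a b *ᵥ T) ⬝ᵥ (polarization a b *ᵥ T) =
      T ⬝ᵥ (polarization a b *ᵥ (polarization a b *ᵥ T)) :=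
    calc (polarization a b *ᵥ T) ⬝ᵥ (polarization a b *ᵥ T)
        = ((polarization a b)ᵀ *ᵥ T) ⬝ᵥ (polarization a b *ᵥ T) := by
          rw [polarization_transpose, polarization_comm_mulVec hT b a]
      _ = T ⬝ᵥ (polarization a b *ᵥ (polarization a b *ᵥ T)) := by
          rw [Matrix.mulVec_transpose, ← Matrix.dotProduct_mulVec]
  simp only [hadj, ← dotProduct_sum]
  rw [htr.sum_sum_polarization_mulVec_mulVec, dotProduct_smul, smul_eq_mul]

lemma two_mul_card_mul_dotProduct_self_le {T : (ι → α) → ℝ}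
    (hT : T ∈ orthogonalInvariants ι α ℝ) :
    2 * (Fintype.card ι * (T ⬝ᵥ T)) ≤
      ∑ a, (polarization a a *ᵥ T) ⬝ᵥ (polarization a a *ᵥ T) := by
  have hcount (I : ι → α) (a : α) : 2 * (#{i | I i = a} * (T I * T I)) ≤
      (#{i | I i = a} * T I) * (#{i | I i = a} * T I) := by
    rcases eq_or_ne (T I) 0 with hI | hI
    · simp [hI]
    · obtain ⟨m, hm⟩ := even_card_filter_eq hT hI a
      have hmm : (m : ℝ) ≤ m * m := mod_cast Nat.le_mul_self m
      rw [hm]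
      push_cast
      nlinarith [mul_le_mul_of_nonneg_right hmm (mul_self_nonneg (T I))]
  have hcard (I : ι → α) : (Fintype.card ι : ℝ) = ∑ a, (#{i | I i = a} : ℝ) :=
    mod_cast card_eq_sum_card_fiberwise fun i _ => mem_univ (I i)
  simp only [dotProduct, polarization_self_mulVec_apply]
  rw [sum_comm, mul_sum, mul_sum]
  refine sum_le_sum fun I _ => ?_
  rw [hcard I, sum_mul, mul_sum]
  exact sum_le_sum fun a _ => hcount I a

lemma eq_zero_of_isTraceless [Nonempty ι] {T : (ι → α) → ℝ}
    (hT : T ∈ orthogonalInvariants ι α ℝ) (htr : IsTraceless T) : T = 0 := by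
  have hdiag := (two_mul_card_mul_dotProduct_self_le hT).trans <|
    sum_le_sum fun a _ => single_le_sum
      (f := fun b => (polarization a b *ᵥ T) ⬝ᵥ (polarization a b *ᵥ T))
      (fun b _ => sum_nonneg fun I _ => mul_self_nonneg _) (mem_univ a)
  rw [sum_sum_dotProduct_self_of_isTraceless hT htr] at hdiag
  have hcard : (0 : ℝ) < Fintype.card ι := mod_cast Fintype.card_pos
  have hnonneg : 0 ≤ T ⬝ᵥ T := sum_nonneg fun I _ => mul_self_nonneg _
  exact dotProduct_self_eq_zero.mp (by nlinarith)

end Traceless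

section FundamentalTheorem

universe u

variable {ι α : Type*} [DecidableEq ι] [Fintype α]

lemma exists_equiv_unit_sum_unit_sum {ι : Type u} {i j : ι} (hij : i ≠ j) :
    ∃ (κ : Type u) (e : (Unit ⊕ Unit) ⊕ κ ≃ ι),
      e (.inl (.inl ())) = i ∧ e (.inl (.inr ())) = j := by
  let f : Unit ⊕ Unit → ι := Sum.elim (fun _ => i) fun _ => j
  have hf : Injective f := by
    rintro (x | x) (y | y) h
    · rfl
    · exact absurd h hij
    · exact absurd h hij.symm
    · rfl
  exact ⟨_, ((Equiv.ofInjective f hf).sumCongr (.refl _)).trans (Equiv.Set.sumCompl _), rfl, rfl⟩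

lemma sum_update_update_eq_contract {κ R : Type*} [CommRing R] (T : (ι → α) → R)
    (e : (Unit ⊕ Unit) ⊕ κ ≃ ι) (I : ι → α) :
    ∑ b, T (update (update I (e (.inl (.inl ()))) b) (e (.inl (.inr ()))) b) =
      contract (T ∘ e.arrowCongr (.refl α)) (I ∘ e ∘ Sum.inr) := by
  refine Fintype.sum_equiv (Equiv.funUnique Unit α).symm _ _ fun b => congrArg T ?_
  ext x
  obtain ⟨(x | x) | x, rfl⟩ := e.surjective x <;> simp [Equiv.arrowCongr]

lemma eq_zero_of_dotProduct_pairingTensor {ι : Type u} [Fintype ι] [DecidableEq ι]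
    [DecidableEq α] {T : (ι → α) → ℝ} (hT : T ∈ orthogonalInvariants ι α ℝ)
    (horth : ∀ (κ : Type) (e : κ ⊕ κ ≃ ι), T ⬝ᵥ pairingTensor α ℝ e = 0) : T = 0 := by
  induction hN : Fintype.card ι using Nat.strong_induction_on generalizing ι with
  | _ N ih =>
  subst hN
  cases isEmpty_or_nonempty ι with
  | inl _ =>
    ext I
    simpa [dotProduct, pairingTensor, Subsingleton.elim I default] using
      horth Empty (Equiv.equivOfIsEmpty _ _)
  | inr _ =>
    refine eq_zero_of_isTraceless hT fun i j hij I => ?_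
    obtain ⟨κ, e, rfl, rfl⟩ := exists_equiv_unit_sum_unit_sum hij
    have : Finite κ := .of_injective (e ∘ Sum.inr) (e.injective.comp Sum.inr_injective)
    cases nonempty_fintype κ
    have hcard : Fintype.card κ < Fintype.card ι := by
      simp [← Fintype.card_congr e]
    rw [sum_update_update_eq_contract, ih _ hcard (contract_mem_orthogonalInvariants
      (comp_arrowCongr_mem_orthogonalInvariants hT e)) ?_ rfl, Pi.zero_apply]
    intro μ e'
    rw [contract_dotProduct_pairingTensor, comp_arrowCongr_dotProduct_pairingTensor, horth]

lemma le_of_forall_dotProduct_eq_zero {m : Type*} [Fintype m] {V W : Submodule ℝ (m → ℝ)}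
    (hWV : W ≤ V) (h : ∀ v ∈ V, (∀ w ∈ W, v ⬝ᵥ w = 0) → v = 0) : V ≤ W := by
  intro v hv
  let toPi := WithLp.linearEquiv 2 ℝ (m → ℝ)
  obtain ⟨w, hw, u, hu, hwu⟩ :=
    (W.comap toPi.toLinearMap).exists_add_mem_mem_orthogonal (toPi.symm v)
  have hvwu : v = toPi w + toPi u := by rw [← map_add, ← hwu, LinearEquiv.apply_symm_apply]
  have huV : toPi u ∈ V := (V.add_mem_iff_right (hWV hw)).mp (hvwu ▸ hv)
  have hu0 : toPi u = 0 := h _ huV fun w' hw' => hu (toPi.symm w') hw'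
  rw [hvwu, hu0, add_zero]
  exact hw

/-- The first fundamental theorem of invariant theory for the orthogonal group. -/
theorem orthogonalInvariants_eq_span_pairingTensor [Fintype ι] [DecidableEq α] :
    orthogonalInvariants ι α ℝ =
      Submodule.span ℝ {S | ∃ (κ : Type) (e : κ ⊕ κ ≃ ι), S = pairingTensor α ℝ e} := by
  have hle : Submodule.span ℝ {S | ∃ (κ : Type) (e : κ ⊕ κ ≃ ι), S = pairingTensor α ℝ e} ≤
      orthogonalInvariants ι α ℝ := by
    rw [Submodule.span_le]
    rintro _ ⟨κ, e, rfl⟩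
    exact pairingTensor_mem_orthogonalInvariants e
  refine le_antisymm (le_of_forall_dotProduct_eq_zero hle fun T hT horth => ?_) hle
  exact eq_zero_of_dotProduct_pairingTensor hT fun κ e =>
    horth _ (Submodule.subset_span ⟨κ, e, rfl⟩)

end FundamentalTheorem

section MatchingInvolution

variable {ι κ : Type*} (e : κ ⊕ κ ≃ ι)

/-- The fixed-point-free involution of `ι` exchanging `e (inl k)` and `e (inr k)`. -/
def matchingInvolution (x : ι) : ι :=
  e (e.symm x).swap

lemma matchingInvolution_matchingInvolution (x : ι) :
    matchingInvolution e (matchingInvolution e x) = x := by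
  simp [matchingInvolution]

lemma matchingInvolution_ne_self (x : ι) : matchingInvolution e x ≠ x := by
  obtain ⟨k | k, rfl⟩ := e.surjective x <;> simp [matchingInvolution]

lemma forall_eq_matchingInvolution_iff {α : Type*} (I : ι → α) :
    (∀ x, I x = I (matchingInvolution e x)) ↔ ∀ k, I (e (.inl k)) = I (e (.inr k)) := by
  simp only [← e.forall_congr_right, Sum.forall, matchingInvolution, Equiv.symm_apply_apply,
    Sum.swap_inl, Sum.swap_inr]
  exact ⟨And.left, fun h => ⟨h, fun k => (h k).symm⟩⟩

end MatchingInvolution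

lemma matchingSetoid_forall_iff {N : ℕ} {f : Fin N → Fin N} (hf : ∀ x, f (f x) = x)
    {α : Type*} (I : Fin N → α) :
    (∀ x y, (matchingSetoid f hf).r x y → I x = I y) ↔ ∀ x, I x = I (f x) := by
  refine ⟨fun h x => h x (f x) (.inr rfl), ?_⟩
  rintro h x y (rfl | rfl)
  exacts [rfl, h x]

lemma Dmat_matchingSetoid_eq_bend_symm {n l k : ℕ} {κ : Type*} (e : κ ⊕ κ ≃ Fin l ⊕ Fin k) :
    Dmat n l k (matchingSetoid _ (matchingInvolution_matchingInvolution (e.trans finSumFinEquiv))) =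
      bend.symm (pairingTensor (Fin n) ℝ e) := by
  ext I J
  have happend (x : Fin l ⊕ Fin k) : Fin.append I J (finSumFinEquiv x) = Sum.elim I J x := by
    cases x <;> simp
  simp only [Dmat, Matrix.of_apply, matchingSetoid_forall_iff, forall_eq_matchingInvolution_iff,
    Equiv.trans_apply, happend, bend_symm_apply, pairingTensor]

/-- every `O(n)`-equivariant linear map `(ℝⁿ)^{⊗k} → (ℝⁿ)^{⊗l}` lies in
the `ℝ`-span of the maps `E_β := D_β`, `β` ranging over all perfect matchings of
`[l+k]` (encoded by fixed-point-free involutions); i.e. the map from the free vector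
space on perfect matchings to `Hom_{O(n)}` is surjective. -/
theorem Ematrix_span (n k l : ℕ) (hn : 0 < n)
    (φ : Matrix (Fin l → Fin n) (Fin k → Fin n) ℝ)
    (hφ : ∀ g : Matrix (Fin n) (Fin n) ℝ, g.transpose * g = 1 →
      tensorPow n l g * φ = φ * tensorPow n k g) :
    φ ∈ Submodule.span ℝ
      {M : Matrix (Fin l → Fin n) (Fin k → Fin n) ℝ |
        ∃ (f : Fin (l + k) → Fin (l + k)) (hf : ∀ x, f (f x) = x),
          (∀ x, f x ≠ x) ∧ M = Dmat n l k (matchingSetoid f hf)} := by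
  have hinv : bend φ ∈ orthogonalInvariants (Fin l ⊕ Fin k) (Fin n) ℝ :=
    bend_mem_orthogonalInvariants_iff.mpr hφ
  rw [orthogonalInvariants_eq_span_pairingTensor] at hinv
  have hspan := Submodule.mem_map_of_mem (f := bend.symm.toLinearMap) hinv
  rw [Submodule.map_span, LinearEquiv.coe_coe, LinearEquiv.symm_apply_apply] at hspan
  refine Submodule.span_mono ?_ hspan
  rintro _ ⟨_, ⟨κ, e, rfl⟩, rfl⟩
  exact ⟨_, matchingInvolution_matchingInvolution (e.trans finSumFinEquiv),
    matchingInvolution_ne_self _, (Dmat_matchingSetoid_eq_bend_symm e).symm⟩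
end
end

section
/- Every SO(n)-equivariant linear map φ : (ℝⁿ)^{⊗k} → (ℝⁿ)^{⊗l} is an ℝ-linear combination of the maps E_β, with β ranging over perfect matchings of [l+k], together with the maps H_α, with α ranging over (l+k)\n-diagrams; i.e. the set {E_β} ∪ {H_α} spans Hom_{SO(n)}((ℝⁿ)^{⊗k}, (ℝⁿ)^{⊗l}). -/
open Classical
noncomputable section

/-- The matrix `H_α : (ℝⁿ)^{⊗k} → (ℝⁿ)^{⊗l}` associated to an `(l+k)\n`-diagram `α`,
encoded by an involution `f` of `Fin (l+k)` whose fixed points (exactly `n` of them)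
are the free vertices: the determinant of the matrix whose columns are the standard
basis vectors indexed by the combined tuple at the free vertices (top row increasing,
then bottom row increasing, i.e. increasing order on `Fin (l+k)`), times the product
of Kronecker deltas over the size-two blocks. -/
def Hmat (n l k : ℕ) (f : Fin (l + k) → Fin (l + k))
    (hcard : (Finset.univ.filter (fun x => f x = x)).card = n) :
    Matrix (Fin l → Fin n) (Fin k → Fin n) ℝ :=
  Matrix.of fun I J =>
    (Matrix.det (Matrix.of fun r c : Fin n =>
      if r = Fin.append I J
        (((Finset.univ.filter (fun x : Fin (l + k) => f x = x)).orderIsoOfFin hcard c : Fin (l + k)))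
      then (1 : ℝ) else 0))
    * ∏ x ∈ Finset.univ.filter (fun x : Fin (l + k) => x < f x),
        (if Fin.append I J x = Fin.append I J (f x) then (1 : ℝ) else 0)

/-!
Read an equivariant map as a tensor `T ∈ (ℝⁿ)^{⊗(l+k)}` fixed by `SO(n)`; differentiating along
one-parameter subgroups, `T` is annihilated by the skew-symmetric matrices. The diagram tensors are
annihilated too, so it suffices that an invariant `T` orthogonal to all of them is zero. Contracting
pairs of legs is adjoint to inserting copies of the invariant form, so every contraction of `T` is
again invariant and orthogonal to the diagrams on the remaining legs. By induction on the number of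
legs we may thus assume `T` traceless.

On a traceless invariant tensor with `N` legs the Casimir element `∑ E_{ba} E_{ab}` of `𝔤𝔩(n)` acts
as the scalar `N`. Its diagonal part alone has norm at least `N`, so all `E_{ab}` with `a ≠ b`
annihilate `T`, which is supported on injective tuples. If `N > 0`, this forces `N = n` and makes
`T` a multiple of the determinant; being orthogonal to it, `T` vanishes.
-/

/-- The coordinates of an element of `(ℝ^α)^{⊗ι}` in the standard tensor basis. Its legs are indexed
by an arbitrary finite type `ι`, so that contracting legs amounts to passing to a subtype. -/
abbrev TensorArray (ι α : Type*) : Type _ := (ι → α) → ℝ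

namespace TensorArray

open Finset Function
open scoped Matrix

section Fibers

variable {ι α : Type*} [Fintype ι] [Fintype α] [DecidableEq α]

theorem card_eq_sum_card_fiber (x : ι → α) : Fintype.card ι = ∑ a, #{i | x i = a} :=
  card_eq_sum_card_fiberwise fun _ _ => mem_univ _

theorem card_le_sum_card_fiber_sq (x : ι → α) : Fintype.card ι ≤ ∑ a, #{i | x i = a} ^ 2 := by
  rw [card_eq_sum_card_fiber x]
  exact sum_le_sum fun a _ => Nat.le_self_pow two_ne_zero _

theorem injective_of_sum_card_fiber_sq_eq {x : ι → α}
    (hx : ∑ a, #{i | x i = a} ^ 2 = Fintype.card ι) : Injective x := by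
  have fiber_eq_sq (a : α) : #{i | x i = a} = #{i | x i = a} ^ 2 :=
    (sum_eq_sum_iff_of_le fun a _ => Nat.le_self_pow two_ne_zero _).1
      ((card_eq_sum_card_fiber x).symm.trans hx.symm) a (mem_univ a)
  intro i j hij
  have fiber_le_one : #{k | x k = x j} ≤ 1 := by nlinarith [fiber_eq_sq (x j)]
  exact card_le_one.1 fiber_le_one i (by simp [hij]) j (by simp)

end Fibers

section GlAction

variable {ι α : Type*} [Fintype ι] [DecidableEq ι] [Fintype α]

/-- The derivation action of the Lie algebra `𝔤𝔩(ℝ^α)` on `(ℝ^α)^{⊗ι}`. -/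
def glAction : Matrix α α ℝ →ₗ[ℝ] TensorArray ι α →ₗ[ℝ] TensorArray ι α :=
  LinearMap.mk₂ ℝ (fun X T x => ∑ i, ∑ c, X (x i) c * T (update x i c))
    (fun X Y T => by ext x; simp [add_mul, sum_add_distrib])
    (fun r X T => by ext x; simp [mul_assoc, mul_sum])
    (fun X S T => by ext x; simp [mul_add, sum_add_distrib])
    (fun r X T => by ext x; simp [mul_left_comm, mul_sum])

theorem glAction_apply (X : Matrix α α ℝ) (T : TensorArray ι α) (x : ι → α) :
    glAction X T x = ∑ i, ∑ c, X (x i) c * T (update x i c) := rfl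

theorem sum_sum_update_comm (i : ι) (F : (ι → α) → (ι → α) → ℝ) :
    ∑ x, ∑ c, F x (update x i c) = ∑ x, ∑ c, F (update x i c) x := by
  have swap_involutive :
      Involutive fun p : (ι → α) × α => (update p.1 i p.2, p.1 i) := fun p => by simp
  simp only [← Fintype.sum_prod_type' (f := fun (x : ι → α) c => F x (update x i c)),
    ← Fintype.sum_prod_type' (f := fun (x : ι → α) c => F (update x i c) x)]
  exact Fintype.sum_equiv swap_involutive.toPerm _ _ fun p => by simp [Involutive.toPerm]

theorem glAction_dotProduct (X : Matrix α α ℝ) (T S : TensorArray ι α) :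
    glAction X T ⬝ᵥ S = T ⬝ᵥ glAction Xᵀ S := by
  have leg_adjoint (i : ι) :
      ∑ x : ι → α, ∑ c, X (x i) c * T (update x i c) * S x =
        ∑ x : ι → α, ∑ c, T x * (X c (x i) * S (update x i c)) := by
    have := sum_sum_update_comm i fun x y => X (x i) (y i) * T y * S x
    simp only [update_self] at this
    rw [this]
    exact sum_congr rfl fun x _ => sum_congr rfl fun c _ => by ring
  simp only [dotProduct, glAction_apply, sum_mul, mul_sum, Matrix.transpose_apply]
  rw [sum_comm, sum_congr rfl fun i _ => leg_adjoint i, sum_comm]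

/-- The tensors annihilated by the skew-symmetric matrices, i.e. by the Lie algebra `𝔰𝔬(ℝ^α)`. -/
def soInvariants (ι α : Type*) [Fintype ι] [DecidableEq ι] [Fintype α] :
    Submodule ℝ (TensorArray ι α) :=
  ⨅ (X : Matrix α α ℝ) (_ : Xᵀ = -X), LinearMap.ker (glAction X)

theorem mem_soInvariants {T : TensorArray ι α} :
    T ∈ soInvariants ι α ↔ ∀ X : Matrix α α ℝ, Xᵀ = -X → glAction X T = 0 := by
  simp [soInvariants, Submodule.mem_iInf]

theorem mem_soInvariants_of_isEmpty [IsEmpty ι] (T : TensorArray ι α) : T ∈ soInvariants ι α :=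
  mem_soInvariants.2 fun X _ => by ext x; simp [glAction_apply]

variable [DecidableEq α]

theorem glAction_single_apply (a b : α) (T : TensorArray ι α) (x : ι → α) :
    glAction (Matrix.single a b 1) T x = ∑ i, if x i = a then T (update x i b) else 0 := by
  simp [glAction_apply, Matrix.single_apply, ite_and, eq_comm (a := a)]

theorem glAction_single_self_apply (a : α) (T : TensorArray ι α) (x : ι → α) :
    glAction (Matrix.single a a 1) T x = #{i | x i = a} * T x := by
  have update_eq (i : ι) :
      (if x i = a then T (update x i a) else 0) = if x i = a then T x else 0 := by
    split_ifs with h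
    · rw [← h, update_eq_self]
    · rfl
  simp [glAction_single_apply, update_eq, ← sum_filter]

theorem glAction_single_comm {T : TensorArray ι α} (hT : T ∈ soInvariants ι α) (a b : α) :
    glAction (Matrix.single a b 1) T = glAction (Matrix.single b a 1) T := by
  have := mem_soInvariants.1 hT (Matrix.single a b 1 - Matrix.single b a 1) (by simp)
  rwa [map_sub, LinearMap.sub_apply, sub_eq_zero] at this

end GlAction

section Traceless

variable {ι α : Type*} [Fintype ι] [DecidableEq ι] [Fintype α] [DecidableEq α]

/-- Every contraction of two distinct legs of `T` vanishes. -/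
def IsTraceless {ι α : Type*} [DecidableEq ι] [Fintype α] (T : TensorArray ι α) : Prop :=
  ∀ i j, i ≠ j → ∀ x, ∑ c, T (update (update x i c) j c) = 0

theorem IsTraceless.sum_glAction_single_update {T : TensorArray ι α} (hT : IsTraceless T)
    (x : ι → α) (i : ι) :
    ∑ a, glAction (Matrix.single (x i) a 1) T (update x i a) = T x := by
  simp only [glAction_single_apply]
  rw [sum_comm, sum_eq_single_of_mem i (mem_univ i)]
  · simp
  · intro j _ hji
    by_cases hx : x j = x i
    · simpa [update_of_ne hji, hx] using hT i j hji.symm x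
    · simp [update_of_ne hji, hx]

-- The left-hand side is the quadratic Casimir element of `𝔤𝔩(ℝ^α)`, applied to `T`.
theorem sum_sum_glAction_single_glAction_single {T : TensorArray ι α}
    (hT : T ∈ soInvariants ι α) (hT₀ : IsTraceless T) :
    ∑ a, ∑ b, glAction (Matrix.single b a 1) (glAction (Matrix.single a b 1) T) =
      Fintype.card ι • T := by
  ext x
  simp only [Finset.sum_apply, Pi.smul_apply]
  calc ∑ a, ∑ b, glAction (Matrix.single b a 1) (glAction (Matrix.single a b 1) T) x
      = ∑ a, ∑ i, glAction (Matrix.single a (x i) 1) T (update x i a) := by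
        refine sum_congr rfl fun a _ => ?_
        simp only [glAction_single_apply _ _ (glAction _ T)]
        rw [sum_comm]
        simp
    _ = ∑ i, ∑ a, glAction (Matrix.single (x i) a 1) T (update x i a) := by
        rw [sum_comm]
        simp only [glAction_single_comm hT]
    _ = Fintype.card ι • T x := by simp [hT₀.sum_glAction_single_update]

theorem sum_sum_glAction_single_dotProduct_self {T : TensorArray ι α}
    (hT : T ∈ soInvariants ι α) (hT₀ : IsTraceless T) :
    ∑ a, ∑ b, glAction (Matrix.single a b 1) T ⬝ᵥ glAction (Matrix.single a b 1) T =
      Fintype.card ι * (T ⬝ᵥ T) := by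
  simp only [glAction_dotProduct, Matrix.transpose_single, ← dotProduct_sum]
  rw [sum_sum_glAction_single_glAction_single hT hT₀, dotProduct_smul, nsmul_eq_mul]

theorem sum_glAction_single_self_dotProduct_self (T : TensorArray ι α) :
    ∑ a, glAction (Matrix.single a a 1) T ⬝ᵥ glAction (Matrix.single a a 1) T =
      ∑ x, (∑ a, #{i | x i = a} ^ 2 : ℕ) * T x ^ 2 := by
  simp only [dotProduct, glAction_single_self_apply]
  rw [sum_comm]
  refine sum_congr rfl fun x _ => ?_
  push_cast
  rw [sum_mul]
  exact sum_congr rfl fun a _ => by ring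

theorem dotProduct_self_nonneg {κ : Type*} [Fintype κ] (v : κ → ℝ) : 0 ≤ v ⬝ᵥ v :=
  sum_nonneg fun _ _ => mul_self_nonneg _

/- The diagonal part of the Casimir form is `∑ₓ (∑ₐ mₐ(x)²) T(x)²`, where `mₐ(x)` is the number of
occurrences of `a` in `x`; since `∑ₐ mₐ(x)² ≥ ∑ₐ mₐ(x) = card ι`, it already exhausts the form. -/
theorem offDiag_eq_zero_and_excess_eq_zero {T : TensorArray ι α}
    (hT : T ∈ soInvariants ι α) (hT₀ : IsTraceless T) :
    ∑ a, ∑ b ∈ univ.erase a,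
        glAction (Matrix.single a b 1) T ⬝ᵥ glAction (Matrix.single a b 1) T = 0 ∧
      ∑ x, ((∑ a, #{i | x i = a} ^ 2 : ℕ) - Fintype.card ι : ℝ) * T x ^ 2 = 0 := by
  rw [← add_eq_zero_iff_of_nonneg
    (sum_nonneg fun a _ => sum_nonneg fun b _ => dotProduct_self_nonneg _)
    (sum_nonneg fun x _ => mul_nonneg (sub_nonneg.2 (mod_cast card_le_sum_card_fiber_sq x))
      (sq_nonneg _))]
  have casimir := sum_sum_glAction_single_dotProduct_self hT hT₀
  have diagonal := sum_glAction_single_self_dotProduct_self T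
  have norm_sq : T ⬝ᵥ T = ∑ x, T x ^ 2 := by simp [dotProduct, sq]
  simp only [sum_erase_eq_sub (mem_univ _), sum_sub_distrib, sub_mul, ← mul_sum]
  rw [casimir, diagonal, norm_sq]
  ring

theorem glAction_single_eq_zero {T : TensorArray ι α} (hT : T ∈ soInvariants ι α)
    (hT₀ : IsTraceless T) (a b : α) (hab : a ≠ b) : glAction (Matrix.single a b 1) T = 0 := by
  have offDiag_eq_zero := (offDiag_eq_zero_and_excess_eq_zero hT hT₀).1
  rw [sum_eq_zero_iff_of_nonneg fun a _ => sum_nonneg fun b _ => dotProduct_self_nonneg _]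
    at offDiag_eq_zero
  have row_eq_zero := offDiag_eq_zero a (mem_univ a)
  rw [sum_eq_zero_iff_of_nonneg fun b _ => dotProduct_self_nonneg _] at row_eq_zero
  exact dotProduct_self_eq_zero.1 (row_eq_zero b (by simp [hab.symm]))

end Traceless

section Support

variable {ι α : Type*} [Fintype ι] [DecidableEq ι] [Fintype α]

theorem injective_of_apply_ne_zero {T : TensorArray ι α} (hT : T ∈ soInvariants ι α)
    (hT₀ : IsTraceless T) {x : ι → α} (hx : T x ≠ 0) : Injective x := by
  classical
  have excess_eq_zero := (offDiag_eq_zero_and_excess_eq_zero hT hT₀).2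
  rw [sum_eq_zero_iff_of_nonneg fun x _ => mul_nonneg
    (sub_nonneg.2 (mod_cast card_le_sum_card_fiber_sq x)) (sq_nonneg _)] at excess_eq_zero
  have excess_apply := (mul_eq_zero_iff_right (pow_ne_zero 2 hx)).1 (excess_eq_zero x (mem_univ x))
  rw [sub_eq_zero, Nat.cast_inj] at excess_apply
  exact injective_of_sum_card_fiber_sq_eq excess_apply

variable [DecidableEq α]

/- If `x` misses the value `a`, then `T x` is the only nonzero term of `E_{a, x i} T` at the tuple
obtained from `x` by writing `a` at position `i`. -/
theorem surjective_of_apply_ne_zero [Nonempty ι] {T : TensorArray ι α}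
    (hT : ∀ a b, a ≠ b → glAction (Matrix.single a b 1) T = 0) {x : ι → α} (hx : T x ≠ 0) :
    Surjective x := by
  by_contra! hsurj
  obtain ⟨a, ha⟩ : ∃ a, ∀ i, x i ≠ a := by simpa [Surjective] using hsurj
  let i : ι := Classical.arbitrary ι
  have := congrFun (hT a (x i) (ha i).symm) (update x i a)
  rw [glAction_single_apply, sum_eq_single_of_mem i (mem_univ i)] at this
  · simp [hx] at this
  · intro j _ hji
    simp [update_of_ne hji, ha j]

theorem apply_comp_swap {T : TensorArray ι α}
    (hT : ∀ a b, a ≠ b → glAction (Matrix.single a b 1) T = 0) {x : ι → α} (hx : Injective x)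
    {i j : ι} (hij : i ≠ j) : T (x ∘ Equiv.swap i j) = -T x := by
  have two_terms := congrFun (hT (x j) (x i) (hx.ne hij.symm)) (update x i (x j))
  rw [glAction_single_apply, sum_eq_add_of_mem i j (mem_univ i) (mem_univ j) hij] at two_terms
  · simp only [update_self, if_true, update_of_ne hij.symm, update_idem, update_eq_self,
      Pi.zero_apply] at two_terms
    rw [Equiv.comp_swap_eq_update, update_comm hij.symm]
    linarith
  · rintro k - ⟨hki, hkj⟩
    rw [update_of_ne hki, if_neg (hx.ne hkj)]

theorem apply_comp_perm {T : TensorArray ι α}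
    (hT : ∀ a b, a ≠ b → glAction (Matrix.single a b 1) T = 0) {x : ι → α} (hx : Injective x)
    (σ : Equiv.Perm ι) : T (x ∘ σ) = (Equiv.Perm.sign σ : ℤ) * T x := by
  induction σ using Equiv.Perm.swap_induction_on' with
  | one => simp
  | mul_swap τ i j hij ih =>
    rw [Equiv.Perm.coe_mul, ← comp_assoc, apply_comp_swap hT (hx.comp τ.injective) hij, ih]
    simp [Equiv.Perm.sign_swap hij]

end Support

section VolumeTensor

variable {ι α : Type*} [Fintype α] [DecidableEq α]

/-- The determinant tensor, whose legs `ι` are identified with the columns `α` by means of `e`. -/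
def volumeTensor (e : α ≃ ι) : TensorArray ι α := fun x =>
  Matrix.det (Matrix.of fun r c => if r = x (e c) then (1 : ℝ) else 0)

theorem volumeTensor_update [DecidableEq ι] (e : α ≃ ι) (x : ι → α) (c d : α) :
    volumeTensor e (update x (e c) d) =
      (Matrix.of fun r c => if r = x (e c) then (1 : ℝ) else 0).adjugate c d := by
  rw [← Matrix.transpose_apply (Matrix.adjugate _), Matrix.adjugate_transpose,
    Matrix.adjugate_apply, Matrix.updateRow_transpose, Matrix.det_transpose, volumeTensor]
  congr 1
  ext r s
  by_cases hs : s = c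
  · simp [hs, Pi.single_apply]
  · simp [hs]

/- Replacing the columns of a matrix `M` one at a time by those of `Xᵀ M` and adding up the
determinants gives `tr (adj M * Xᵀ M) = tr X * det M`. -/
theorem glAction_volumeTensor [Fintype ι] [DecidableEq ι] (X : Matrix α α ℝ) (e : α ≃ ι) :
    glAction X (volumeTensor e) = X.trace • volumeTensor e := by
  ext x
  let M : Matrix α α ℝ := Matrix.of fun r c => if r = x (e c) then 1 else 0
  calc glAction X (volumeTensor e) x
      = ∑ c, ∑ d, X (x (e c)) d * M.adjugate c d := by
        rw [glAction_apply, ← e.sum_comp]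
        simp only [volumeTensor_update, M]
    _ = (M.adjugate * (Xᵀ * M)).trace := by
        simp [Matrix.trace, Matrix.mul_apply, M, mul_comm]
    _ = (X.trace • volumeTensor e) x := by
        rw [Matrix.trace_mul_comm, Matrix.mul_assoc, Matrix.mul_adjugate]
        simp [M, volumeTensor, mul_comm]

theorem volumeTensor_mem_soInvariants [Fintype ι] [DecidableEq ι] (e : α ≃ ι) :
    volumeTensor e ∈ soInvariants ι α := by
  refine mem_soInvariants.2 fun X hX => ?_
  have trace_eq_neg : X.trace = -X.trace := by
    rw [← Matrix.trace_neg, ← hX, Matrix.trace_transpose]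
  rw [glAction_volumeTensor, self_eq_neg.1 trace_eq_neg, zero_smul]

theorem volumeTensor_symm_comp_perm [Fintype ι] [DecidableEq ι] (e : α ≃ ι) (σ : Equiv.Perm ι) :
    volumeTensor e (e.symm ∘ σ) = (Equiv.Perm.sign σ : ℤ) := by
  have columns_eq : (Matrix.of fun r c => if r = (e.symm ∘ σ) (e c) then (1 : ℝ) else 0) =
      (1 : Matrix α α ℝ).submatrix id (e.symm.permCongr σ) := by
    ext r c
    simp [Matrix.one_apply, Equiv.permCongr_apply]
    congr
  rw [volumeTensor, columns_eq, Matrix.det_permute', Equiv.Perm.sign_permCongr]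
  simp

end VolumeTensor

section Pairing

variable {ι α : Type*} [Fintype ι] [DecidableEq ι] [DecidableEq α] {f : ι → ι}

/-- The tensor product of a tensor on the fixed points of `f` with one copy of the invariant form
`∑ₐ eₐ ⊗ eₐ` for each pair `{i, f i}` of legs exchanged by the involution `f`. -/
def insertPairs (f : ι → ι) (S : TensorArray {i // f i = i} α) : TensorArray ι α := fun x =>
  if ∀ i, x (f i) = x i then S fun i => x i else 0

theorem insertPairs_update_of_fixed (S : TensorArray {i // f i = i} α) (x : ι → α)
    (i : {i // f i = i}) (c : α) (hf : Involutive f) :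
    insertPairs f S (update x i c) =
      if ∀ j, x (f j) = x j then S (update (fun j => x j) i c) else 0 := by
  obtain ⟨i, hi⟩ := i
  have symmetric_iff : (∀ j, update x i c (f j) = update x i c j) ↔ ∀ j, x (f j) = x j := by
    refine forall_congr' fun j => ?_
    by_cases hj : j = i
    · simp [hj, hi]
    · have hfj : f j ≠ i := fun h => hj (by rw [← hf j, h, hi])
      rw [update_of_ne hj, update_of_ne hfj]
  have restrict_update : (fun j : {j // f j = j} => update x i c j) =
      update (fun j : {j // f j = j} => x j) ⟨i, hi⟩ c := by
    ext j
    simp [update_apply, Subtype.ext_iff]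
  simp only [insertPairs, symmetric_iff, restrict_update]

theorem insertPairs_update_of_ne (S : TensorArray {i // f i = i} α) (x : ι → α)
    {i : ι} (hi : f i ≠ i) (c : α) (hf : Involutive f) :
    insertPairs f S (update x i c) =
      if c = x (f i) ∧ ∀ j, j ≠ i → j ≠ f i → x (f j) = x j then
        S (fun j : {j // f j = j} => x j) else 0 := by
  have symmetric_iff : (∀ j, update x i c (f j) = update x i c j) ↔
      c = x (f i) ∧ ∀ j, j ≠ i → j ≠ f i → x (f j) = x j := by
    simp only [update_apply]
    grind [Involutive]
  have restrict_update : (fun j : {j // f j = j} => update x i c j) =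
      fun j : {j // f j = j} => x j := by
    ext ⟨j, hj⟩
    exact update_of_ne (by rintro rfl; exact hi hj) _ _
  simp only [insertPairs, symmetric_iff, restrict_update]

variable [Fintype α]

/- The legs `i` and `f i` of a pair contribute `X (x i) (x (f i))` and `X (x (f i)) (x i)` times the
same factor, and these cancel. -/
theorem sum_paired_legs_eq_zero (hf : Involutive f) {X : Matrix α α ℝ} (hX : Xᵀ = -X)
    (S : TensorArray {i // f i = i} α) (x : ι → α) :
    ∑ i with ¬ f i = i, ∑ c, X (x i) c * insertPairs f S (update x i c) = 0 := by
  have leg_eq (i : ι) (hi : f i ≠ i) : ∑ c, X (x i) c * insertPairs f S (update x i c) =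
      X (x i) (x (f i)) *
        if ∀ j, j ≠ i → j ≠ f i → x (f j) = x j then S (fun j => x j) else 0 := by
    simp [insertPairs_update_of_ne S x hi _ hf, ite_and]
  refine sum_involution (fun i _ => f i) (fun i hi => ?_) (fun i hi _ => (mem_filter.1 hi).2)
    (fun i hi => ?_) fun i _ => hf i
  · have hi' : f i ≠ i := (mem_filter.1 hi).2
    have skew : X (x (f i)) (x i) = -X (x i) (x (f i)) := congrFun (congrFun hX (x i)) (x (f i))
    rw [leg_eq i hi', leg_eq (f i) (by rw [hf i]; exact hi'.symm), hf i, skew]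
    simp only [imp.swap (a := _ ≠ f i), neg_mul, add_neg_cancel]
  · simpa [hf i] using Ne.symm (mem_filter.1 hi).2

theorem glAction_insertPairs (hf : Involutive f) {X : Matrix α α ℝ} (hX : Xᵀ = -X)
    (S : TensorArray {i // f i = i} α) :
    glAction X (insertPairs f S) = insertPairs f (glAction X S) := by
  ext x
  rw [glAction_apply, ← sum_filter_add_sum_filter_not univ fun i => f i = i,
    sum_paired_legs_eq_zero hf hX, add_zero, ← sum_subtype_eq_sum_filter]
  simp only [insertPairs_update_of_fixed S x _ _ hf]
  by_cases hx : ∀ j, x (f j) = x j <;> simp [hx, insertPairs, glAction_apply]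

theorem insertPairs_mem_soInvariants (hf : Involutive f) {S : TensorArray {i // f i = i} α}
    (hS : S ∈ soInvariants _ α) : insertPairs f S ∈ soInvariants ι α :=
  mem_soInvariants.2 fun X hX => by
    rw [glAction_insertPairs hf hX, mem_soInvariants.1 hS X hX]
    ext x
    simp [insertPairs]

end Pairing

section CompSwap

variable {ι : Type*} [DecidableEq ι] {f : ι → ι} {i j : ι}

theorem involutive_comp_swap (hf : Involutive f) (hi : f i = i) (hj : f j = j) :
    Involutive (f ∘ Equiv.swap i j) := by
  intro k
  simp only [comp_apply, Equiv.swap_apply_def]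
  grind [Involutive]

theorem comp_swap_apply_eq_self_iff (hi : f i = i) (hj : f j = j)
    (hij : i ≠ j) (k : ι) : (f ∘ Equiv.swap i j) k = k ↔ f k = k ∧ k ≠ i ∧ k ≠ j := by
  simp only [comp_apply, Equiv.swap_apply_def]
  grind [Involutive]

theorem card_fixed_comp_swap_lt [Fintype ι] (hi : f i = i) (hj : f j = j) (hij : i ≠ j) :
    Fintype.card {k // (f ∘ Equiv.swap i j) k = k} < Fintype.card {k // f k = k} :=
  have fixed_iff := comp_swap_apply_eq_self_iff hi hj hij
  Fintype.card_lt_of_injective_of_notMem (fun k => ⟨k, ((fixed_iff k).1 k.2).1⟩)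
    (fun _ _ h => Subtype.ext (congrArg (fun k => k.1) h)) (b := ⟨i, hi⟩)
    (by rintro ⟨k, hk⟩; exact ((fixed_iff k).1 k.2).2.1 (congrArg (fun k => k.1) hk))

theorem forall_apply_comp_swap_eq_iff (hi : f i = i) (hj : f j = j) {α : Type*} (x : ι → α) :
    (∀ k, x ((f ∘ Equiv.swap i j) k) = x k) ↔ (∀ k, x (f k) = x k) ∧ x i = x j := by
  simp only [comp_apply, Equiv.swap_apply_def]
  grind

end CompSwap

section Contraction

variable {ι α : Type*} [Fintype ι] [DecidableEq ι] [Fintype α] [DecidableEq α] {f : ι → ι}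

/-- The contraction of each pair `{i, f i}` of legs exchanged by the involution `f`. -/
def contractPairs (f : ι → ι) (T : TensorArray ι α) : TensorArray {i // f i = i} α := fun z =>
  ∑ x, if (∀ i, x (f i) = x i) ∧ (fun i : {i // f i = i} => x i) = z then T x else 0

theorem contractPairs_dotProduct (f : ι → ι) (T : TensorArray ι α)
    (S : TensorArray {i // f i = i} α) : contractPairs f T ⬝ᵥ S = T ⬝ᵥ insertPairs f S := by
  simp only [dotProduct, contractPairs, insertPairs, sum_mul]
  rw [sum_comm]
  refine sum_congr rfl fun x _ => ?_
  by_cases hx : ∀ i, x (f i) = x i <;> simp [hx]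

theorem contractPairs_id_apply (T : TensorArray ι α) (x : ι → α) :
    contractPairs id T (fun i : {i // id i = i} => x i.1) = T x :=
  (Fintype.sum_eq_single x fun _ hy =>
    if_neg fun h => hy (funext fun i => congrFun h.2 ⟨i, rfl⟩)).trans (if_pos ⟨fun _ => rfl, rfl⟩)

theorem contractPairs_mem_soInvariants (hf : Involutive f) {T : TensorArray ι α}
    (hT : T ∈ soInvariants ι α) : contractPairs f T ∈ soInvariants _ α := by
  refine mem_soInvariants.2 fun X hX => dotProduct_eq_zero _ fun S => ?_
  have transpose_skew : Xᵀᵀ = -Xᵀ := by rw [hX, Matrix.transpose_neg, hX]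
  rw [glAction_dotProduct, contractPairs_dotProduct, ← glAction_insertPairs hf transpose_skew,
    ← glAction_dotProduct, mem_soInvariants.1 hT X hX, zero_dotProduct]

theorem sum_contractPairs_update_update (T : TensorArray ι α)
    {i j : {i // f i = i}} (hij : i ≠ j) (z : {i // f i = i} → α) :
    ∑ c, contractPairs f T (update (update z i c) j c) =
      contractPairs (f ∘ Equiv.swap i.1 j.1) T fun k =>
        z ⟨k, ((comp_swap_apply_eq_self_iff i.2 j.2 (Subtype.coe_ne_coe.2 hij) k).1 k.2).1⟩ := by
  have hij' : i.1 ≠ j.1 := Subtype.coe_ne_coe.2 hij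
  have restrict_eq_iff (x : ι → α) (c : α) :
      (fun k : {k // f k = k} => x k) = update (update z i c) j c ↔
        c = x i ∧ x i = x j ∧
          (fun k : {k // (f ∘ Equiv.swap i.1 j.1) k = k} => x k) =
            fun k : {k // (f ∘ Equiv.swap i.1 j.1) k = k} =>
              z ⟨k, ((comp_swap_apply_eq_self_iff i.2 j.2 hij' k).1 k.2).1⟩ := by
    simp only [funext_iff, Subtype.forall, update_apply, Subtype.ext_iff,
      comp_swap_apply_eq_self_iff i.2 j.2 hij']
    grind
  simp only [contractPairs]
  rw [sum_comm]
  refine sum_congr rfl fun x _ => ?_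
  simp only [restrict_eq_iff, forall_apply_comp_swap_eq_iff i.2 j.2]
  by_cases hx : ∀ k, x (f k) = x k <;> simp [hx, ite_and]

end Contraction

section Vanishing

variable {ι α : Type*} [Fintype ι] [DecidableEq ι] [Fintype α]

theorem IsTraceless.eq_zero_of_card_ne [Nonempty ι] {T : TensorArray ι α} (hT₀ : IsTraceless T)
    (hT : T ∈ soInvariants ι α) (hcard : Fintype.card ι ≠ Fintype.card α) : T = 0 := by
  classical
  ext x
  by_contra hx
  exact hcard (Fintype.card_of_bijective ⟨injective_of_apply_ne_zero hT hT₀ hx,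
    surjective_of_apply_ne_zero (glAction_single_eq_zero hT hT₀) hx⟩)

variable [DecidableEq α]

/- Such a tensor is supported on bijections `ι → α`, where it is alternating, so it is a multiple of
the determinant tensor. -/
theorem eq_smul_volumeTensor [Nonempty ι] {T : TensorArray ι α} (hT : T ∈ soInvariants ι α)
    (hT₀ : IsTraceless T) (e : α ≃ ι) : T = T e.symm • volumeTensor e := by
  have offDiag := glAction_single_eq_zero hT hT₀
  have volume_offDiag (a b : α) (hab : a ≠ b) :
      glAction (Matrix.single a b 1) (volumeTensor e) = 0 := by
    simp [glAction_volumeTensor, hab]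
  ext x
  by_cases hx : Bijective x
  · obtain ⟨σ, rfl⟩ : ∃ σ : Equiv.Perm ι, x = e.symm ∘ σ :=
      ⟨(Equiv.ofBijective x hx).trans e, by ext; simp⟩
    rw [apply_comp_perm offDiag e.symm.injective]
    simp [volumeTensor_symm_comp_perm, mul_comm]
  · have hsurj : ¬ Surjective x := fun h =>
      hx ((Fintype.bijective_iff_surjective_and_card x).2 ⟨h, Fintype.card_congr e.symm⟩)
    have apply_eq_zero {S : TensorArray ι α}
        (hS : ∀ a b, a ≠ b → glAction (Matrix.single a b 1) S = 0) : S x = 0 :=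
      not_not.1 (mt (surjective_of_apply_ne_zero hS) hsurj)
    simp [apply_eq_zero offDiag, apply_eq_zero volume_offDiag]

theorem eq_zero_of_traceless {T : TensorArray ι α} (hT : T ∈ soInvariants ι α)
    (hT₀ : IsTraceless T) (hempty : IsEmpty ι → T ⬝ᵥ 1 = 0)
    (hvolume : Fintype.card ι = Fintype.card α → ∃ e : α ≃ ι, T ⬝ᵥ volumeTensor e = 0) :
    T = 0 := by
  rcases isEmpty_or_nonempty ι with hι | hι
  · ext x
    simpa [dotProduct, Subsingleton.elim default x] using hempty hι
  by_cases hcard : Fintype.card ι = Fintype.card α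
  · obtain ⟨e, he⟩ := hvolume hcard
    rw [← dotProduct_self_eq_zero]
    nth_rw 2 [eq_smul_volumeTensor hT hT₀ e]
    rw [dotProduct_smul, he, smul_zero]
  · exact hT₀.eq_zero_of_card_ne hT hcard

variable {T : TensorArray ι α}

theorem isTraceless_contractPairs {f : ι → ι}
    (hf : ∀ i j : {i // f i = i}, i ≠ j → contractPairs (f ∘ Equiv.swap i.1 j.1) T = 0) :
    IsTraceless (contractPairs f T) := fun i j hij z => by
  rw [sum_contractPairs_update_update T hij, hf i j hij, Pi.zero_apply]

/- Induction on the number of free legs: a further contraction joins two of them, so that by the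
induction hypothesis the contraction at hand is traceless. -/
theorem contractPairs_eq_zero (hT : T ∈ soInvariants ι α)
    (hmatching : ∀ f : ι → ι, Involutive f → (∀ i, f i ≠ i) → T ⬝ᵥ insertPairs f 1 = 0)
    (hvolume : ∀ f : ι → ι, Involutive f → Fintype.card {i // f i = i} = Fintype.card α →
      ∃ e : α ≃ {i // f i = i}, T ⬝ᵥ insertPairs f (volumeTensor e) = 0)
    (f : ι → ι) (hf : Involutive f) : contractPairs f T = 0 := by
  induction hN : Fintype.card {i // f i = i} using Nat.strong_induction_on generalizing f with
  | _ N ih =>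
  subst hN
  have traceless : IsTraceless (contractPairs f T) := isTraceless_contractPairs fun i j hij =>
    ih _ (card_fixed_comp_swap_lt i.2 j.2 (Subtype.coe_ne_coe.2 hij)) _
      (involutive_comp_swap hf i.2 j.2) rfl
  refine eq_zero_of_traceless (contractPairs_mem_soInvariants hf hT) traceless
    (fun hempty => ?_) fun hcard => ?_
  · rw [contractPairs_dotProduct]
    exact hmatching f hf fun i hi => hempty.elim ⟨i, hi⟩
  · simpa only [contractPairs_dotProduct] using hvolume f hf hcard

theorem eq_zero_of_forall_dotProduct_insertPairs_eq_zero (hT : T ∈ soInvariants ι α)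
    (hmatching : ∀ f : ι → ι, Involutive f → (∀ i, f i ≠ i) → T ⬝ᵥ insertPairs f 1 = 0)
    (hvolume : ∀ f : ι → ι, Involutive f → Fintype.card {i // f i = i} = Fintype.card α →
      ∃ e : α ≃ {i // f i = i}, T ⬝ᵥ insertPairs f (volumeTensor e) = 0) : T = 0 := by
  ext x
  rw [← contractPairs_id_apply T x,
    contractPairs_eq_zero hT hmatching hvolume id (fun _ => rfl)]
  rfl

end Vanishing

section Spanning

theorem le_of_forall_dotProduct_eq_zero {κ : Type*} [Fintype κ] {W V : Submodule ℝ (κ → ℝ)}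
    (hWV : W ≤ V) (h : ∀ u ∈ V, (∀ w ∈ W, w ⬝ᵥ u = 0) → u = 0) : V ≤ W := by
  let B : LinearMap.BilinForm ℝ (κ → ℝ) := dotProductBilin ℝ ℝ
  have isRefl : B.IsRefl := fun u w huw => (dotProduct_comm w u).trans huw
  have isCompl : IsCompl W (B.orthogonal W) :=
    (LinearMap.BilinForm.isCompl_orthogonal_iff_disjoint isRefl).2 <|
      Submodule.disjoint_def.2 fun w hw hw' => dotProduct_self_eq_zero.1 (hw' w hw)
  intro u hu
  obtain ⟨w, hw, v, hv, rfl⟩ :=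
    Submodule.mem_sup.1 (isCompl.sup_eq_top ▸ Submodule.mem_top (x := u))
  have hvV : v ∈ V := (V.add_mem_iff_right (hWV hw)).1 hu
  rwa [h v hvV hv, add_zero]

variable {ι : Type*} [Fintype ι] [LinearOrder ι] {n : ℕ}

/-- The increasing enumeration of the free vertices of a diagram. -/
def freeLegs (f : ι → ι) (hcard : #{i | f i = i} = n) : Fin n ≃ {i // f i = i} :=
  ((univ.filter fun i => f i = i).orderIsoOfFin hcard).toEquiv.trans
    (Equiv.subtypeEquivRight fun _ => mem_filter_univ _)

/-- The tensors of perfect matchings, encoded as fixed-point-free involutions. -/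
def matchingTensors (ι α : Type*) [Fintype ι] [DecidableEq ι] [DecidableEq α] :
    Set (TensorArray ι α) :=
  {T | ∃ f : ι → ι, Involutive f ∧ (∀ i, f i ≠ i) ∧ T = insertPairs f 1}

/-- The tensors of diagrams with `n` free vertices, encoded as involutions with `n` fixed points. -/
def freeVertexTensors (ι : Type*) [Fintype ι] [LinearOrder ι] (n : ℕ) :
    Set (TensorArray ι (Fin n)) :=
  {T | ∃ (f : ι → ι) (hcard : #{i | f i = i} = n),
    Involutive f ∧ T = insertPairs f (volumeTensor (freeLegs f hcard))}

theorem matchingTensors_subset_soInvariants (ι α : Type*) [Fintype ι] [DecidableEq ι] [Fintype α]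
    [DecidableEq α] : matchingTensors ι α ⊆ soInvariants ι α := by
  rintro _ ⟨f, hf, hfree, rfl⟩
  have : IsEmpty {i // f i = i} := ⟨fun i => hfree i i.2⟩
  exact insertPairs_mem_soInvariants hf (mem_soInvariants_of_isEmpty 1)

theorem freeVertexTensors_subset_soInvariants :
    freeVertexTensors ι n ⊆ soInvariants ι (Fin n) := by
  rintro _ ⟨f, hcard, hf, rfl⟩
  exact insertPairs_mem_soInvariants hf (volumeTensor_mem_soInvariants _)

theorem span_matchingTensors_union_freeVertexTensors :
    Submodule.span ℝ (matchingTensors ι (Fin n) ∪ freeVertexTensors ι n) =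
      soInvariants ι (Fin n) := by
  have span_le : Submodule.span ℝ (matchingTensors ι (Fin n) ∪ freeVertexTensors ι n) ≤
      soInvariants ι (Fin n) :=
    Submodule.span_le.2 (Set.union_subset (matchingTensors_subset_soInvariants ι (Fin n))
      freeVertexTensors_subset_soInvariants)
  refine span_le.antisymm (le_of_forall_dotProduct_eq_zero span_le fun T hT orthogonal => ?_)
  refine eq_zero_of_forall_dotProduct_insertPairs_eq_zero hT (fun f hf hfree => ?_)
    fun f hf hcard => ?_
  · rw [dotProduct_comm]
    exact orthogonal _ (Submodule.subset_span (Or.inl ⟨f, hf, hfree, rfl⟩))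
  · have hcard' : #{i | f i = i} = n := by rw [← Fintype.card_subtype, hcard, Fintype.card_fin]
    refine ⟨freeLegs f hcard', ?_⟩
    rw [dotProduct_comm]
    exact orthogonal _ (Submodule.subset_span (Or.inr ⟨f, hcard', hf, rfl⟩))

end Spanning

section SpecialOrthogonal

theorem tensorPow_one (n N : ℕ) : tensorPow n N 1 = 1 := by
  ext x y
  simp [tensorPow, Matrix.one_apply, prod_ite_zero, funext_iff]

theorem tensorPow_mul (n N : ℕ) (g h : Matrix (Fin n) (Fin n) ℝ) :
    tensorPow n N (g * h) = tensorPow n N g * tensorPow n N h := by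
  ext x y
  simp [tensorPow, Matrix.mul_apply, ← prod_mul_distrib, prod_univ_sum]

theorem tensorPow_transpose (n N : ℕ) (g : Matrix (Fin n) (Fin n) ℝ) :
    tensorPow n N gᵀ = (tensorPow n N g)ᵀ := rfl

theorem tensorPow_append (n l k : ℕ) (g : Matrix (Fin n) (Fin n) ℝ) (I I' : Fin l → Fin n)
    (J J' : Fin k → Fin n) : tensorPow n (l + k) g (Fin.append I J) (Fin.append I' J') =
      tensorPow n l g I I' * tensorPow n k g J J' := by
  simp [tensorPow, Fin.prod_univ_add]

theorem exp_transpose_mul_exp {α : Type*} [Fintype α] [DecidableEq α] {X : Matrix α α ℝ}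
    (hX : Xᵀ = -X) : (NormedSpace.exp X)ᵀ * NormedSpace.exp X = 1 := by
  rw [← Matrix.exp_transpose, hX, ← Matrix.exp_add_of_commute _ _ (Commute.refl X).neg_left,
    neg_add_cancel, NormedSpace.exp_zero]

-- `exp X` is the square of the orthogonal matrix `exp (X / 2)`.
theorem det_exp_eq_one {α : Type*} [Fintype α] [DecidableEq α] {X : Matrix α α ℝ}
    (hX : Xᵀ = -X) : (NormedSpace.exp X).det = 1 := by
  have half_skew : ((1 / 2 : ℝ) • X)ᵀ = -((1 / 2 : ℝ) • X) := by
    rw [Matrix.transpose_smul, hX, smul_neg]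
  have det_sq := congrArg Matrix.det (exp_transpose_mul_exp half_skew)
  rw [Matrix.det_mul, Matrix.det_transpose, Matrix.det_one] at det_sq
  have half_add_half : (1 / 2 : ℝ) • X + (1 / 2 : ℝ) • X = X := by rw [← add_smul]; norm_num
  rwa [← Matrix.det_mul, ← Matrix.exp_add_of_commute _ _ (Commute.refl _), half_add_half] at det_sq

theorem hasDerivAt_exp_smul_apply {α : Type*} [Fintype α] [DecidableEq α] (X : Matrix α α ℝ)
    (a b : α) : HasDerivAt (fun t : ℝ => NormedSpace.exp (t • X) a b) (X a b) 0 := by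
  let _ : NormedRing (Matrix α α ℝ) := Matrix.linftyOpNormedRing
  let _ : NormedAlgebra ℝ (Matrix α α ℝ) := Matrix.linftyOpNormedAlgebra
  have deriv_exp := hasDerivAt_exp_smul_const X (0 : ℝ)
  rw [zero_smul, NormedSpace.exp_zero, one_mul] at deriv_exp
  exact hasDerivAt_pi.1 (hasDerivAt_pi.1 deriv_exp a) b

theorem sum_prod_erase_mul {ι α : Type*} [Fintype ι] [DecidableEq ι] [Fintype α] [DecidableEq α]
    (x : ι → α) (i : ι) (F : TensorArray ι α) :
    ∑ y, (∏ j ∈ univ.erase i, if x j = y j then 1 else 0) * F y = ∑ c, F (update x i c) := by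
  have eq_update_iff (y : ι → α) (c : α) :
      y = update x i c ↔ c = y i ∧ ∀ j ∈ univ.erase i, x j = y j := by
    simp [eq_update_iff, eq_comm]
  calc ∑ y, (∏ j ∈ univ.erase i, if x j = y j then 1 else 0) * F y
      = ∑ y, ∑ c, if y = update x i c then F y else 0 := by
        simp [prod_ite_zero, eq_update_iff, ite_and]
    _ = ∑ c, F (update x i c) := by rw [sum_comm]; simp

variable {n N : ℕ}

theorem hasDerivAt_tensorPow_mulVec {g : ℝ → Matrix (Fin n) (Fin n) ℝ}
    {X : Matrix (Fin n) (Fin n) ℝ} (hg₀ : g 0 = 1)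
    (hg : ∀ a b, HasDerivAt (fun t => g t a b) (X a b) 0) (T : TensorArray (Fin N) (Fin n))
    (x : Fin N → Fin n) :
    HasDerivAt (fun t => (tensorPow n N (g t) *ᵥ T) x) (glAction X T x) 0 := by
  have deriv_entry (y : Fin N → Fin n) : HasDerivAt (fun t => tensorPow n N (g t) x y)
      (∑ i, (∏ j ∈ univ.erase i, if x j = y j then 1 else 0) * X (x i) (y i)) 0 := by
    have := HasDerivAt.fun_finsetProd (u := univ) fun i _ => hg (x i) (y i)
    simpa [tensorPow, hg₀, Matrix.one_apply] using this
  refine (HasDerivAt.fun_sum fun y (_ : y ∈ univ) =>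
    (deriv_entry y).mul_const (T y)).congr_deriv ?_
  simp only [sum_mul, mul_assoc]
  rw [sum_comm, glAction_apply]
  refine sum_congr rfl fun i _ => ?_
  rw [sum_prod_erase_mul x i fun y => X (x i) (y i) * T y]
  simp

theorem mem_soInvariants_of_tensorPow_mulVec_eq {T : TensorArray (Fin N) (Fin n)}
    (hT : ∀ g : Matrix (Fin n) (Fin n) ℝ, gᵀ * g = 1 → g.det = 1 → tensorPow n N g *ᵥ T = T) :
    T ∈ soInvariants (Fin N) (Fin n) := by
  refine mem_soInvariants.2 fun X hX => funext fun x => ?_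
  have skew (t : ℝ) : (t • X)ᵀ = -(t • X) := by rw [Matrix.transpose_smul, hX, smul_neg]
  have orbit_deriv := hasDerivAt_tensorPow_mulVec (g := fun t : ℝ => NormedSpace.exp (t • X))
    (by simp) (hasDerivAt_exp_smul_apply X) T x
  simp only [hT _ (exp_transpose_mul_exp (skew _)) (det_exp_eq_one (skew _))] at orbit_deriv
  exact orbit_deriv.unique (hasDerivAt_const 0 (T x))

end SpecialOrthogonal

section ToMatrix

variable {n l k : ℕ}

/-- The matrix of the linear map `(ℝⁿ)^{⊗k} → (ℝⁿ)^{⊗l}` corresponding to a tensor in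
`(ℝⁿ)^{⊗(l+k)}` under the standard self-duality of `ℝⁿ`. -/
def toMatrix (n l k : ℕ) :
    TensorArray (Fin (l + k)) (Fin n) ≃ₗ[ℝ] Matrix (Fin l → Fin n) (Fin k → Fin n) ℝ :=
  LinearEquiv.funCongrLeft ℝ ℝ (Fin.appendEquiv l k) ≪≫ₗ LinearEquiv.curry ℝ ℝ _ _ ≪≫ₗ
    Matrix.ofLinearEquiv ℝ

theorem toMatrix_apply (T : TensorArray (Fin (l + k)) (Fin n)) (I : Fin l → Fin n)
    (J : Fin k → Fin n) : toMatrix n l k T I J = T (Fin.append I J) := rfl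

theorem toMatrix_tensorPow_mulVec (g : Matrix (Fin n) (Fin n) ℝ)
    (T : TensorArray (Fin (l + k)) (Fin n)) :
    toMatrix n l k (tensorPow n (l + k) g *ᵥ T) =
      tensorPow n l g * toMatrix n l k T * (tensorPow n k g)ᵀ := by
  ext I J
  have sum_append (F : TensorArray (Fin (l + k)) (Fin n)) :
      ∑ x, F x = ∑ J' : Fin k → Fin n, ∑ I' : Fin l → Fin n, F (Fin.append I' J') := by
    rw [← (Fin.appendEquiv l k).sum_comp, Fintype.sum_prod_type_right]
    rfl
  rw [toMatrix_apply, Matrix.mulVec, dotProduct, sum_append]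
  simp only [tensorPow_append, Matrix.mul_apply, toMatrix_apply, Matrix.transpose_apply, sum_mul]
  exact sum_congr rfl fun J' _ => sum_congr rfl fun I' _ => by ring

theorem mem_soInvariants_of_toMatrix_equivariant {T : TensorArray (Fin (l + k)) (Fin n)}
    (hT : ∀ g : Matrix (Fin n) (Fin n) ℝ, gᵀ * g = 1 → g.det = 1 →
      tensorPow n l g * toMatrix n l k T = toMatrix n l k T * tensorPow n k g) :
    T ∈ soInvariants (Fin (l + k)) (Fin n) := by
  refine mem_soInvariants_of_tensorPow_mulVec_eq fun g hg hdet => (toMatrix n l k).injective ?_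
  rw [toMatrix_tensorPow_mulVec, hT g hg hdet, Matrix.mul_assoc, ← tensorPow_transpose,
    ← tensorPow_mul, mul_eq_one_comm.1 hg, tensorPow_one, Matrix.mul_one]

theorem toMatrix_insertPairs_one {f : Fin (l + k) → Fin (l + k)} (hf : Involutive f) :
    toMatrix n l k (insertPairs f 1) = Dmat n l k (matchingSetoid f hf) := by
  ext I J
  have symmetric_iff (x : Fin (l + k) → Fin n) :
      (∀ i, x (f i) = x i) ↔ ∀ i j, (matchingSetoid f hf).r i j → x i = x j := by
    refine ⟨?_, fun h i => (h i (f i) (Or.inr rfl)).symm⟩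
    rintro h i j (rfl | rfl)
    exacts [rfl, (h i).symm]
  simp only [toMatrix_apply, insertPairs, Dmat, Matrix.of_apply, Pi.one_apply, symmetric_iff]

theorem prod_pairs_eq_ite {ι α : Type*} [Fintype ι] [LinearOrder ι] [DecidableEq α] {f : ι → ι}
    (hf : Involutive f) (x : ι → α) :
    (∏ i with i < f i, if x i = x (f i) then (1 : ℝ) else 0) =
      if ∀ i, x (f i) = x i then 1 else 0 := by
  have forall_iff : (∀ i ∈ univ.filter fun i => i < f i, x i = x (f i)) ↔
      ∀ i, x (f i) = x i := by
    refine ⟨fun h i => ?_, fun h i _ => (h i).symm⟩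
    rcases lt_trichotomy i (f i) with hi | hi | hi
    · exact (h i (by simpa using hi)).symm
    · rw [← hi]
    · simpa [hf i] using h (f i) (by simpa [hf i] using hi)
  simp only [prod_ite_zero, forall_iff, prod_const_one]

theorem toMatrix_insertPairs_volumeTensor {f : Fin (l + k) → Fin (l + k)} (hf : Involutive f)
    (hcard : #{i | f i = i} = n) :
    toMatrix n l k (insertPairs f (volumeTensor (freeLegs f hcard))) = Hmat n l k f hcard := by
  ext I J
  rw [toMatrix_apply, Hmat, Matrix.of_apply, prod_pairs_eq_ite hf, mul_ite, mul_one, mul_zero]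
  rfl

end ToMatrix

end TensorArray

/-- every `SO(n)`-equivariant linear map `(ℝⁿ)^{⊗k} → (ℝⁿ)^{⊗l}` lies in
the `ℝ`-span of the maps `E_β := D_β` (`β` ranging over perfect matchings of `[l+k]`,
encoded by fixed-point-free involutions) together with the maps `H_α` (`α` ranging over
`(l+k)\n`-diagrams, encoded by involutions with exactly `n` fixed points). -/
theorem special_orthogonal_span (n k l : ℕ) (hn : 0 < n)
    (φ : Matrix (Fin l → Fin n) (Fin k → Fin n) ℝ)
    (hφ : ∀ g : Matrix (Fin n) (Fin n) ℝ, g.transpose * g = 1 → g.det = 1 →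
      tensorPow n l g * φ = φ * tensorPow n k g) :
    φ ∈ Submodule.span ℝ
      ({M : Matrix (Fin l → Fin n) (Fin k → Fin n) ℝ |
          ∃ (f : Fin (l + k) → Fin (l + k)) (hf : ∀ x, f (f x) = x),
            (∀ x, f x ≠ x) ∧ M = Dmat n l k (matchingSetoid f hf)} ∪
       {M : Matrix (Fin l → Fin n) (Fin k → Fin n) ℝ |
          ∃ (f : Fin (l + k) → Fin (l + k))
            (hcard : (Finset.univ.filter (fun x => f x = x)).card = n),
            (∀ x, f (f x) = x) ∧ M = Hmat n l k f hcard}) := by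
  obtain ⟨T, rfl⟩ := (TensorArray.toMatrix n l k).surjective φ
  have hT := TensorArray.mem_soInvariants_of_toMatrix_equivariant hφ
  rw [← TensorArray.span_matchingTensors_union_freeVertexTensors] at hT
  refine Submodule.span_mono ?_ (Submodule.apply_mem_span_image_of_mem_span
    (TensorArray.toMatrix n l k).toLinearMap hT)
  rintro _ ⟨_, ⟨f, hf, hfree, rfl⟩ | ⟨f, hcard, hf, rfl⟩, rfl⟩
  · exact Or.inl ⟨f, hf, hfree, TensorArray.toMatrix_insertPairs_one hf⟩
  · exact Or.inr ⟨f, hcard, hf, TensorArray.toMatrix_insertPairs_volumeTensor hf hcard⟩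
end
end
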